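/- With the Fock-module operators e_j, f_j defined below and with u = 0, the operator [e_2, f_0] = e_2∘f_0 − f_0∘e_2 on F satisfies [e_2, f_0]|λ⟩ = 2·|λ|·|λ⟩ for every partition λ, where |λ| = Σ_i λ_i. -/

import Mathlib

noncomputable section

/-- A partition: a weakly decreasing function `ℕ → ℕ` (0-indexed rows) that takes the
value `0` somewhere (hence eventually). -/
def IsPtn (f : ℕ → ℕ) : Prop := Antitone f ∧ ∃ N, f N = 0

/-- The type of partitions. -/
abbrev Ptn : Type := {f : ℕ → ℕ // IsPtn f}

/-- The Fock space: the free `ℂ`-vector space with basis indexed by all partitions. -/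
abbrev FockSp : Type := Ptn →₀ ℂ

namespace Fock

/-- The number of nonzero parts of a partition (the first 0-indexed row equal to zero). -/
def plen (lam : Ptn) : ℕ := Nat.find lam.2.2

/-- `|λ| = Σ_i λ_i`. -/
def psize (lam : Ptn) : ℕ := ∑ i ∈ Finset.range (plen lam), lam.1 i

/-- A box may be added in (0-indexed) row `i`, i.e. `λ + 1_i` is again a partition. -/
def Addable (lam : Ptn) (i : ℕ) : Prop := ∀ p, p < i → lam.1 i < lam.1 p

instance (lam : Ptn) (i : ℕ) : Decidable (Addable lam i) :=
  inferInstanceAs (Decidable (∀ p, p < i → lam.1 i < lam.1 p))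

/-- A box may be removed from (0-indexed) row `i`, i.e. `λ − 1_i` is again a partition. -/
def Removable (lam : Ptn) (i : ℕ) : Prop := lam.1 (i + 1) < lam.1 i

instance (lam : Ptn) (i : ℕ) : Decidable (Removable lam i) :=
  inferInstanceAs (Decidable (lam.1 (i + 1) < lam.1 i))

/-- The partition `λ + 1_i`. -/
def addBox (lam : Ptn) (i : ℕ) (h : Addable lam i) : Ptn :=
  ⟨Function.update lam.1 i (lam.1 i + 1), by
    constructor
    · intro a b hab
      rw [Function.update_apply, Function.update_apply]
      split_ifs with hb ha ha
      · exact le_rfl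
      · have : a < i := lt_of_le_of_ne (hb ▸ hab) ha
        exact h a this
      · have : lam.1 b ≤ lam.1 i := lam.2.1 (ha ▸ hab)
        omega
      · exact lam.2.1 hab
    · obtain ⟨N, hN⟩ := lam.2.2
      refine ⟨max N (i + 1), ?_⟩
      rw [Function.update_apply, if_neg (by omega : ¬ max N (i + 1) = i)]
      have := lam.2.1 (le_max_left N (i + 1))
      omega⟩

/-- The partition `λ − 1_i`. -/
def remBox (lam : Ptn) (i : ℕ) (h : Removable lam i) : Ptn :=
  ⟨Function.update lam.1 i (lam.1 i - 1), by
    constructor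
    · intro a b hab
      rw [Function.update_apply, Function.update_apply]
      split_ifs with hb ha ha
      · exact le_rfl
      · have : lam.1 i ≤ lam.1 a := lam.2.1 (le_of_lt (lt_of_le_of_ne (hb ▸ hab) ha))
        omega
      · have h1 : lam.1 b ≤ lam.1 (i + 1) := lam.2.1 (by omega : i + 1 ≤ b)
        have h2 : lam.1 (i + 1) < lam.1 i := h
        omega
      · exact lam.2.1 hab
    · obtain ⟨N, hN⟩ := lam.2.2
      refine ⟨max N (i + 1), ?_⟩
      rw [Function.update_apply, if_neg (by omega : ¬ max N (i + 1) = i)]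
      have := lam.2.1 (le_max_left N (i + 1))
      omega⟩

variable (h1 h2 u : ℂ)

/-- The coefficient of `|λ + 1_i⟩` in `e_j |λ⟩` (0-indexed row `i`). -/
def ecoef (j : ℕ) (lam : Ptn) (i : ℕ) : ℂ :=
  (1 / h1) *
  (∏ p ∈ Finset.range i,
    (((((lam.1 i : ℂ) - (lam.1 p : ℂ)) * h1 + (((i : ℂ) - (p : ℂ)) - 1) * h2)
        * (((lam.1 i : ℂ) - (lam.1 p : ℂ) + 1) * h1 + (((i : ℂ) - (p : ℂ)) + 1) * h2))
      / ((((lam.1 i : ℂ) - (lam.1 p : ℂ)) * h1 + ((i : ℂ) - (p : ℂ)) * h2)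
        * (((lam.1 i : ℂ) - (lam.1 p : ℂ) + 1) * h1 + ((i : ℂ) - (p : ℂ)) * h2)))) *
  ((lam.1 i : ℂ) * h1 + (i : ℂ) * h2 + u) ^ j

/-- The coefficient of `|λ − 1_i⟩` in `f_j |λ⟩` (0-indexed row `i`). -/
def fcoef (j : ℕ) (lam : Ptn) (i : ℕ) : ℂ :=
  (-(1 / h1)) *
  ((((lam.1 (i+1) : ℂ) - (lam.1 i : ℂ)) * h1)
      / ((((lam.1 (i+1) : ℂ) - (lam.1 i : ℂ)) + 1) * h1 + h2)) *
  (∏ p ∈ Finset.Icc (i + 1) (plen lam),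
    (((((lam.1 p : ℂ) - (lam.1 i : ℂ) + 1) * h1 + (((p : ℂ) - (i : ℂ)) + 1) * h2)
        * (((lam.1 (p+1) : ℂ) - (lam.1 i : ℂ)) * h1 + ((p : ℂ) - (i : ℂ)) * h2))
      / ((((lam.1 (p+1) : ℂ) - (lam.1 i : ℂ) + 1) * h1 + (((p : ℂ) - (i : ℂ)) + 1) * h2)
        * (((lam.1 p : ℂ) - (lam.1 i : ℂ)) * h1 + ((p : ℂ) - (i : ℂ)) * h2)))) *
  (((lam.1 i : ℂ) - 1) * h1 + (i : ℂ) * h2 + u) ^ j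

/-- `e_j |λ⟩`, a finite sum over the rows where a box can be added (all of which lie in
`{0, …, plen λ}`). -/
def evec (j : ℕ) (lam : Ptn) : FockSp :=
  ∑ i ∈ Finset.range (plen lam + 1),
    if h : Addable lam i then Finsupp.single (addBox lam i h) (ecoef h1 h2 u j lam i) else 0

/-- `f_j |λ⟩`, a finite sum over the rows where a box can be removed (all of which lie in
`{0, …, plen λ − 1}`). -/
def fvec (j : ℕ) (lam : Ptn) : FockSp :=
  ∑ i ∈ Finset.range (plen lam),
    if h : Removable lam i then Finsupp.single (remBox lam i h) (fcoef h1 h2 u j lam i) else 0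

/-- The Fock-module operator `e_j`. -/
def eOp (j : ℕ) : Module.End ℂ FockSp :=
  Finsupp.lsum ℂ fun lam => LinearMap.toSpanSingleton ℂ FockSp (evec h1 h2 u j lam)

/-- The Fock-module operator `f_j`. -/
def fOp (j : ℕ) : Module.End ℂ FockSp :=
  Finsupp.lsum ℂ fun lam => LinearMap.toSpanSingleton ℂ FockSp (fvec h1 h2 u j lam)

/-- `ψ_k := [e_k, f_0]`. -/
def psiOp (k : ℕ) : Module.End ℂ FockSp :=
  eOp h1 h2 u k * fOp h1 h2 u 0 - fOp h1 h2 u 0 * eOp h1 h2 u k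

end Fock


namespace Fock

open Finset

section Residues

variable {ι : Type*} [DecidableEq ι] (a b : ι → ℂ)

/-- The residue at `a i` of the rational function `∏ j ∈ S, (z - b j) / (z - a j)`. -/
def residue (S : Finset ι) (i : ι) : ℂ :=
  (a i - b i) * ∏ j ∈ S.erase i, (a i - b j) / (a i - a j)

lemma residue_insert_self {S : Finset ι} {s : ι} (hs : s ∉ S) :
    residue a b (insert s S) s = (a s - b s) * ∏ j ∈ S, (a s - b j) / (a s - a j) := by
  rw [residue, erase_insert hs]

lemma residue_insert_of_mem {S : Finset ι} {s i : ι} (hs : s ∉ S) (hi : i ∈ S) :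
    residue a b (insert s S) i = residue a b S i * ((a i - b s) / (a i - a s)) := by
  have hne : s ≠ i := fun h => hs (h ▸ hi)
  rw [residue, residue, erase_insert_of_ne hne,
    prod_insert (fun h => hs (mem_of_mem_erase h))]
  ring

/-- Partial fraction expansion of `∏ j ∈ S, (z - b j) / (z - a j)`. -/
lemma prod_div_eq_one_add_sum_residue (S : Finset ι) (ha : Set.InjOn a S) (w : ℂ)
    (hw : ∀ i ∈ S, w ≠ a i) :
    ∏ j ∈ S, (w - b j) / (w - a j) = 1 + ∑ i ∈ S, residue a b S i / (w - a i) := by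
  induction S using Finset.induction_on generalizing w with
  | empty => simp
  | insert s S hs ih =>
    have haS : Set.InjOn a S := ha.mono (by simp)
    have hsa : ∀ i ∈ S, a s ≠ a i := fun i hi h =>
      hs (ha (by simp) (by simp [hi]) h ▸ hi)
    rw [prod_insert hs, sum_insert hs, residue_insert_self a b hs,
      sum_congr rfl (fun i hi => by rw [residue_insert_of_mem a b hs hi]),
      ih haS w (fun i hi => hw i (mem_insert_of_mem hi)), ih haS (a s) hsa]
    have h0 : w - a s ≠ 0 := sub_ne_zero.2 (hw s (mem_insert_self _ _))
    have hterm : ∀ i ∈ S, residue a b S i * ((a i - b s) / (a i - a s)) / (w - a i)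
        = (w - b s) / (w - a s) * (residue a b S i / (w - a i))
          - (a s - b s) / (w - a s) * (residue a b S i / (a s - a i)) := by
      intro i hi
      have h1 : w - a i ≠ 0 := sub_ne_zero.2 (hw i (mem_insert_of_mem hi))
      have h2 : a s - a i ≠ 0 := sub_ne_zero.2 (hsa i hi)
      have h3 : a i - a s ≠ 0 := sub_ne_zero.2 (hsa i hi).symm
      have h4 : a i - a s = -(a s - a i) := by ring
      rw [h4]
      field_simp
      ring
    rw [sum_congr rfl hterm, sum_sub_distrib, ← mul_sum, ← mul_sum]
    field_simp
    ring

/-- The moments of order at most two of the residues of `∏ j ∈ S, (z - b j) / (z - a j)`, in terms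
of the power sums of the zeros and poles. -/
lemma moments_residue (S : Finset ι) (ha : Set.InjOn a S) :
    ∑ i ∈ S, residue a b S i = ∑ i ∈ S, (a i - b i) ∧
    ∑ i ∈ S, residue a b S i * a i
      = (∑ i ∈ S, (a i - b i)) ^ 2 / 2 + (∑ i ∈ S, (a i ^ 2 - b i ^ 2)) / 2 ∧
    ∑ i ∈ S, residue a b S i * a i ^ 2
      = (∑ i ∈ S, (a i - b i)) ^ 3 / 6
        + (∑ i ∈ S, (a i - b i)) * (∑ i ∈ S, (a i ^ 2 - b i ^ 2)) / 2
        + (∑ i ∈ S, (a i ^ 3 - b i ^ 3)) / 3 := by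
  induction S using Finset.induction_on with
  | empty => simp
  | insert s S hs ih =>
    have haS : Set.InjOn a S := ha.mono (by simp)
    have hsa : ∀ i ∈ S, a s ≠ a i := fun i hi h =>
      hs (ha (by simp) (by simp [hi]) h ▸ hi)
    obtain ⟨ih0, ih1, ih2⟩ := ih haS
    have key : ∀ q r : ℂ → ℂ, (∀ x, q x - q (a s) = (x - a s) * r x) →
        ∑ i ∈ insert s S, residue a b (insert s S) i * q (a i)
          = ∑ i ∈ S, residue a b S i * q (a i)
            + (a s - b s) * (q (a s) + ∑ i ∈ S, residue a b S i * r (a i)) := by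
      intro q r hqr
      rw [sum_insert hs, residue_insert_self a b hs,
        prod_div_eq_one_add_sum_residue a b S haS (a s) hsa]
      have hterm : ∀ i ∈ S, residue a b (insert s S) i * q (a i)
          = residue a b S i * q (a i) + (a s - b s) * (residue a b S i * r (a i))
            - (a s - b s) * q (a s) * (residue a b S i / (a s - a i)) := by
        intro i hi
        have h2 : a s - a i ≠ 0 := sub_ne_zero.2 (hsa i hi)
        have h4 : a i - a s = -(a s - a i) := by ring
        have h5 : q (a i) = q (a s) + (a i - a s) * r (a i) := by rw [← hqr]; ring
        rw [residue_insert_of_mem a b hs hi, h5, h4]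
        field_simp
        ring
      rw [sum_congr rfl hterm, sum_sub_distrib, sum_add_distrib, ← mul_sum, ← mul_sum]
      ring
    have k0 := key (fun _ => 1) (fun _ => 0) (by intro x; ring)
    have k1 := key (fun x => x) (fun _ => 1) (by intro x; ring)
    have k2 := key (fun x => x ^ 2) (fun x => x + a s) (by intro x; ring)
    simp only [mul_one, mul_zero, sum_const_zero, add_zero, mul_add, sum_add_distrib,
      ← sum_mul] at k0 k1 k2
    refine ⟨?_, ?_, ?_⟩
    · rw [k0, sum_insert hs, ih0]; ring
    · rw [k1, sum_insert hs, sum_insert hs, ih0, ih1]; ring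
    · rw [k2, sum_insert hs, sum_insert hs, sum_insert hs, ih0, ih1, ih2]; ring

end Residues

section Partitions

lemma apply_eq_zero_of_plen_le (lam : Ptn) {i : ℕ} (h : plen lam ≤ i) : lam.1 i = 0 := by
  have h1 : lam.1 (plen lam) = 0 := Nat.find_spec lam.2.2
  have := lam.2.1 h
  omega

lemma plen_le_of_apply_eq_zero (lam : Ptn) {i : ℕ} (h : lam.1 i = 0) : plen lam ≤ i :=
  Nat.find_min' lam.2.2 h

lemma apply_pos_of_lt_plen (lam : Ptn) {i : ℕ} (h : i < plen lam) : 0 < lam.1 i :=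
  Nat.pos_of_ne_zero fun h0 => absurd (plen_le_of_apply_eq_zero lam h0) (by omega)

lemma Addable.le_plen {lam : Ptn} {i : ℕ} (h : Addable lam i) : i ≤ plen lam := by
  by_contra hc
  have h1 := h (plen lam) (by omega)
  rw [apply_eq_zero_of_plen_le lam le_rfl] at h1
  omega

lemma Removable.lt_plen {lam : Ptn} {i : ℕ} (h : Removable lam i) : i < plen lam := by
  by_contra hc
  have h1 : lam.1 (i + 1) < lam.1 i := h
  rw [apply_eq_zero_of_plen_le lam (not_lt.1 hc)] at h1
  omega

lemma addable_succ_iff (lam : Ptn) (i : ℕ) : Addable lam (i + 1) ↔ lam.1 (i + 1) < lam.1 i :=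
  ⟨fun h => h i (by omega), fun h p hp => h.trans_le (lam.2.1 (by omega))⟩

lemma addBox_apply (lam : Ptn) (i : ℕ) (h : Addable lam i) (p : ℕ) :
    (addBox lam i h).1 p = if p = i then lam.1 i + 1 else lam.1 p := by
  simp [addBox, Function.update_apply]

lemma remBox_apply (lam : Ptn) (i : ℕ) (h : Removable lam i) (p : ℕ) :
    (remBox lam i h).1 p = if p = i then lam.1 i - 1 else lam.1 p := by
  simp [remBox, Function.update_apply]

lemma addable_remBox_self {lam : Ptn} {k : ℕ} (h : Removable lam k) :
    Addable (remBox lam k h) k := by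
  intro p hp
  have h1 : lam.1 (k + 1) < lam.1 k := h
  have h2 := lam.2.1 hp.le
  simp only [remBox_apply, if_pos, if_neg hp.ne]
  omega

lemma removable_addBox_self {lam : Ptn} {k : ℕ} (h : Addable lam k) :
    Removable (addBox lam k h) k := by
  have h2 := lam.2.1 (Nat.le_succ k)
  simp only [Removable, addBox_apply, if_pos, if_neg (Nat.succ_ne_self k)]
  simp only [Nat.succ_eq_add_one] at h2
  omega

lemma addBox_remBox {lam : Ptn} {k : ℕ} (h : Removable lam k) :
    addBox (remBox lam k h) k (addable_remBox_self h) = lam := by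
  apply Subtype.ext
  funext p
  have h1 : lam.1 (k + 1) < lam.1 k := h
  simp only [addBox_apply, remBox_apply, if_pos]
  split_ifs with hp
  · subst hp; omega
  · rfl

lemma remBox_addBox {lam : Ptn} {k : ℕ} (h : Addable lam k) :
    remBox (addBox lam k h) k (removable_addBox_self h) = lam := by
  apply Subtype.ext
  funext p
  simp only [addBox_apply, remBox_apply, if_pos]
  split_ifs with hp
  · subst hp; omega
  · rfl

lemma removable_and_addable_iff (lam : Ptn) {i k : ℕ} (hik : i ≠ k) :
    (∃ h : Removable lam k, Addable (remBox lam k h) i) ↔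
      ∃ h : Addable lam i, Removable (addBox lam i h) k := by
  cases i with
  | zero =>
    have h0 : ∀ mu : Ptn, Addable mu 0 := fun mu p hp => absurd hp (Nat.not_lt_zero p)
    simp only [h0, exists_prop, and_true, exists_true_left]
    simp only [Removable, addBox_apply]
    rw [if_neg (by omega), if_neg (by omega)]
  | succ i =>
    constructor
    · rintro ⟨hk, hi⟩
      have hk' : lam.1 (k + 1) < lam.1 k := hk
      rw [addable_succ_iff, remBox_apply, remBox_apply, if_neg hik] at hi
      rcases eq_or_ne i k with rfl | h
      · rw [if_pos rfl] at hi
        refine ⟨(addable_succ_iff _ _).2 (by omega), ?_⟩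
        rw [Removable, addBox_apply, addBox_apply, if_pos rfl, if_neg (by omega)]
        omega
      · rw [if_neg h] at hi
        refine ⟨(addable_succ_iff _ _).2 hi, ?_⟩
        rwa [Removable, addBox_apply, addBox_apply, if_neg (by omega), if_neg hik.symm]
    · rintro ⟨hi, hk⟩
      have hi' := (addable_succ_iff _ _).1 hi
      rw [Removable, addBox_apply, addBox_apply, if_neg hik.symm] at hk
      rcases eq_or_ne i k with rfl | h
      · rw [if_pos rfl] at hk
        have hr : Removable lam i := hi'
        refine ⟨hr, (addable_succ_iff _ _).2 ?_⟩
        rw [remBox_apply, remBox_apply, if_pos rfl, if_neg hik]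
        omega
      · rw [if_neg (by omega)] at hk
        have hr : Removable lam k := hk
        refine ⟨hr, (addable_succ_iff _ _).2 ?_⟩
        rwa [remBox_apply, remBox_apply, if_neg hik, if_neg h]

lemma addBox_remBox_comm (lam : Ptn) {i k : ℕ} (hik : i ≠ k) (hk : Removable lam k)
    (hi : Addable (remBox lam k hk) i) (hi' : Addable lam i)
    (hk' : Removable (addBox lam i hi') k) :
    addBox (remBox lam k hk) i hi = remBox (addBox lam i hi') k hk' := by
  apply Subtype.ext
  funext p
  simp only [addBox_apply, remBox_apply, if_neg hik, if_neg hik.symm]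
  split_ifs <;> first | rfl | omega

lemma plen_remBox_le (lam : Ptn) {k : ℕ} (h : Removable lam k) :
    plen (remBox lam k h) ≤ plen lam := by
  apply plen_le_of_apply_eq_zero
  rw [remBox_apply, if_neg h.lt_plen.ne', apply_eq_zero_of_plen_le lam le_rfl]

lemma plen_addBox_le (lam : Ptn) {i : ℕ} (h : Addable lam i) :
    plen (addBox lam i h) ≤ plen lam + 1 := by
  apply plen_le_of_apply_eq_zero
  have := h.le_plen
  rw [addBox_apply, if_neg (by omega), apply_eq_zero_of_plen_le lam (by omega)]

end Partitions

section Operators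

variable (h1 h2 u : ℂ)

lemma evec_eq_sum_range (j : ℕ) (lam : Ptn) {N : ℕ} (hN : plen lam + 1 ≤ N) :
    evec h1 h2 u j lam = ∑ i ∈ range N,
      if h : Addable lam i then Finsupp.single (addBox lam i h) (ecoef h1 h2 u j lam i) else 0 := by
  refine sum_subset (range_mono hN) fun i _ hi => dif_neg fun h => hi ?_
  have := h.le_plen
  simp only [mem_range]
  omega

lemma fvec_eq_sum_range (j : ℕ) (lam : Ptn) {N : ℕ} (hN : plen lam ≤ N) :
    fvec h1 h2 u j lam = ∑ i ∈ range N,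
      if h : Removable lam i then Finsupp.single (remBox lam i h) (fcoef h1 h2 u j lam i)
      else 0 := by
  refine sum_subset (range_mono hN) fun i _ hi => dif_neg fun h => hi ?_
  simpa using h.lt_plen

lemma eOp_single (j : ℕ) (lam : Ptn) (c : ℂ) :
    eOp h1 h2 u j (Finsupp.single lam c) = c • evec h1 h2 u j lam := by
  simp [eOp]

lemma fOp_single (j : ℕ) (lam : Ptn) (c : ℂ) :
    fOp h1 h2 u j (Finsupp.single lam c) = c • fvec h1 h2 u j lam := by
  simp [fOp]

/-- The component of `e_j f_l |λ⟩` in which a box is removed from row `k`, then one added in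
row `i`. -/
def efTerm (j l : ℕ) (lam : Ptn) (k i : ℕ) : FockSp :=
  if hk : Removable lam k then
    if hi : Addable (remBox lam k hk) i then
      Finsupp.single (addBox (remBox lam k hk) i hi)
        (fcoef h1 h2 u l lam k * ecoef h1 h2 u j (remBox lam k hk) i)
    else 0
  else 0

/-- The component of `f_l e_j |λ⟩` in which a box is added in row `i`, then one removed from
row `k`. -/
def feTerm (j l : ℕ) (lam : Ptn) (k i : ℕ) : FockSp :=
  if hi : Addable lam i then
    if hk : Removable (addBox lam i hi) k then
      Finsupp.single (remBox (addBox lam i hi) k hk)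
        (ecoef h1 h2 u j lam i * fcoef h1 h2 u l (addBox lam i hi) k)
    else 0
  else 0

lemma eOp_mul_fOp_single (j l : ℕ) (lam : Ptn) :
    (eOp h1 h2 u j * fOp h1 h2 u l) (Finsupp.single lam 1)
      = ∑ k ∈ range (plen lam + 1), ∑ i ∈ range (plen lam + 1), efTerm h1 h2 u j l lam k i := by
  rw [Module.End.mul_apply, fOp_single, one_smul,
    fvec_eq_sum_range h1 h2 u l lam (Nat.le_succ _), map_sum]
  refine sum_congr rfl fun k _ => ?_
  by_cases hk : Removable lam k
  · have := plen_remBox_le lam hk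
    simp only [efTerm, dif_pos hk]
    rw [eOp_single, evec_eq_sum_range h1 h2 u j _ (N := plen lam + 1) (by omega), smul_sum]
    refine sum_congr rfl fun i _ => ?_
    split_ifs <;> simp
  · simp [efTerm, hk]

lemma fOp_mul_eOp_single (j l : ℕ) (lam : Ptn) :
    (fOp h1 h2 u l * eOp h1 h2 u j) (Finsupp.single lam 1)
      = ∑ k ∈ range (plen lam + 1), ∑ i ∈ range (plen lam + 1), feTerm h1 h2 u j l lam k i := by
  rw [sum_comm, Module.End.mul_apply, eOp_single, one_smul,
    evec_eq_sum_range h1 h2 u j lam le_rfl, map_sum]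
  refine sum_congr rfl fun i _ => ?_
  by_cases hi : Addable lam i
  · simp only [feTerm, dif_pos hi]
    rw [fOp_single, fvec_eq_sum_range h1 h2 u l _ (plen_addBox_le lam hi), smul_sum]
    refine sum_congr rfl fun k _ => ?_
    split_ifs <;> simp
  · simp [feTerm, hi]

end Operators

section Coefficients

variable (h1 h2 : ℂ)

/-- The coordinate `λ_i h1 + i h2` of the first box to the right of row `i`. -/
def rowEnd (lam : Ptn) (i : ℕ) : ℂ := (lam.1 i : ℂ) * h1 + (i : ℂ) * h2

/-- The two-row interaction factor of the matrix elements. -/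
def rowFactor (t : ℂ) : ℂ := ((t - h2) * (t + h1 + h2)) / (t * (t + h1))

lemma rowFactor_neg (t : ℂ) : rowFactor h1 h2 (-h1 - t) = rowFactor h1 h2 t := by
  unfold rowFactor
  congr 1 <;> ring

lemma ecoef_eq (j : ℕ) (lam : Ptn) (i : ℕ) :
    ecoef h1 h2 0 j lam i = (1 / h1) *
      (∏ p ∈ range i, rowFactor h1 h2 (rowEnd h1 h2 lam i - rowEnd h1 h2 lam p)) *
      rowEnd h1 h2 lam i ^ j := by
  unfold ecoef rowFactor rowEnd
  congr 1
  · congr 1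
    refine prod_congr rfl fun p _ => ?_
    congr 1 <;> ring
  · ring

/-- The product in `fcoef`, cut off before row `m`. -/
def lowerProd (lam : Ptn) (i m : ℕ) : ℂ :=
  (∏ p ∈ Ico (i + 1) m, rowFactor h1 h2 (rowEnd h1 h2 lam p - rowEnd h1 h2 lam i)) *
    ((rowEnd h1 h2 lam m - rowEnd h1 h2 lam i - h2) /
      (rowEnd h1 h2 lam m - rowEnd h1 h2 lam i + h1))

lemma lowerProd_succ (lam : Ptn) {i m : ℕ} (h : i < m) :
    lowerProd h1 h2 lam i (m + 1) = lowerProd h1 h2 lam i m *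
      (((rowEnd h1 h2 lam m - rowEnd h1 h2 lam i + h1 + h2) *
          (rowEnd h1 h2 lam (m + 1) - rowEnd h1 h2 lam i - h2)) /
        ((rowEnd h1 h2 lam (m + 1) - rowEnd h1 h2 lam i + h1) *
          (rowEnd h1 h2 lam m - rowEnd h1 h2 lam i))) := by
  unfold lowerProd
  rw [prod_Ico_succ_top (by omega)]
  simp only [rowFactor, div_eq_mul_inv, mul_inv]
  ring

lemma rowEnd_sub_add_ne_zero
    (hgen : ∀ a b : ℤ, ¬(a = 0 ∧ b = 0) → (a : ℂ) * h1 + (b : ℂ) * h2 ≠ 0)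
    (lam : Ptn) {i p : ℕ} (hip : i ≠ p) (c : ℤ) :
    rowEnd h1 h2 lam p - rowEnd h1 h2 lam i + c * h1 ≠ 0 := by
  have := hgen ((lam.1 p : ℤ) - lam.1 i + c) ((p : ℤ) - i) (by omega)
  intro h
  apply this
  rw [← h]
  unfold rowEnd
  push_cast
  ring

lemma rowEnd_sub_ne_zero
    (hgen : ∀ a b : ℤ, ¬(a = 0 ∧ b = 0) → (a : ℂ) * h1 + (b : ℂ) * h2 ≠ 0)
    (lam : Ptn) {i p : ℕ} (hip : i ≠ p) : rowEnd h1 h2 lam p - rowEnd h1 h2 lam i ≠ 0 := by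
  simpa using rowEnd_sub_add_ne_zero h1 h2 hgen lam hip 0

lemma lowerProd_succ_of_apply_eq_zero
    (hgen : ∀ a b : ℤ, ¬(a = 0 ∧ b = 0) → (a : ℂ) * h1 + (b : ℂ) * h2 ≠ 0)
    (lam : Ptn) {i m : ℕ} (h : i < m) (hm : lam.1 m = 0) :
    lowerProd h1 h2 lam i (m + 1) = lowerProd h1 h2 lam i m := by
  have hm' : lam.1 (m + 1) = 0 := by
    have := lam.2.1 (Nat.le_succ m)
    simp only [Nat.succ_eq_add_one] at this
    omega
  have hx : rowEnd h1 h2 lam (m + 1) = rowEnd h1 h2 lam m + h2 := by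
    simp only [rowEnd, hm, hm']; push_cast; ring
  have hd1 := rowEnd_sub_ne_zero h1 h2 hgen lam h.ne
  have hd2 := rowEnd_sub_add_ne_zero h1 h2 hgen lam (by omega : i ≠ m + 1) 1
  rw [hx] at hd2
  rw [lowerProd_succ h1 h2 lam h, hx]
  have hd3 : rowEnd h1 h2 lam m + h2 - rowEnd h1 h2 lam i + h1 ≠ 0 := by simpa using hd2
  have : (rowEnd h1 h2 lam m - rowEnd h1 h2 lam i + h1 + h2) *
      (rowEnd h1 h2 lam m + h2 - rowEnd h1 h2 lam i - h2)
      = (rowEnd h1 h2 lam m + h2 - rowEnd h1 h2 lam i + h1) *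
          (rowEnd h1 h2 lam m - rowEnd h1 h2 lam i) := by ring
  rw [this, div_self (mul_ne_zero hd3 hd1), mul_one]

lemma lowerProd_eq_of_le
    (hgen : ∀ a b : ℤ, ¬(a = 0 ∧ b = 0) → (a : ℂ) * h1 + (b : ℂ) * h2 ≠ 0)
    (lam : Ptn) {i m M : ℕ} (h : i < m) (hm : lam.1 m = 0) (hM : m ≤ M) :
    lowerProd h1 h2 lam i M = lowerProd h1 h2 lam i m := by
  induction M, hM using Nat.le_induction with
  | base => rfl
  | succ M hM ih =>
    rw [lowerProd_succ_of_apply_eq_zero h1 h2 hgen lam (by omega) ?_, ih]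
    have := lam.2.1 hM
    omega

lemma fcoef_zero_eq
    (hgen : ∀ a b : ℤ, ¬(a = 0 ∧ b = 0) → (a : ℂ) * h1 + (b : ℂ) * h2 ≠ 0)
    (lam : Ptn) {i m : ℕ} (hi : i < plen lam) (hm : i < m) (hm0 : lam.1 m = 0) :
    fcoef h1 h2 0 0 lam i = -(1 / h1) * lowerProd h1 h2 lam i m := by
  have key : ∀ M, i ≤ M →
      ((((lam.1 (i+1) : ℂ) - (lam.1 i : ℂ)) * h1)
      / ((((lam.1 (i+1) : ℂ) - (lam.1 i : ℂ)) + 1) * h1 + h2)) *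
      (∏ p ∈ Finset.Icc (i + 1) M,
        (((((lam.1 p : ℂ) - (lam.1 i : ℂ) + 1) * h1 + (((p : ℂ) - (i : ℂ)) + 1) * h2)
        * (((lam.1 (p+1) : ℂ) - (lam.1 i : ℂ)) * h1 + ((p : ℂ) - (i : ℂ)) * h2))
        / ((((lam.1 (p+1) : ℂ) - (lam.1 i : ℂ) + 1) * h1 + (((p : ℂ) - (i : ℂ)) + 1) * h2)
        * (((lam.1 p : ℂ) - (lam.1 i : ℂ)) * h1 + ((p : ℂ) - (i : ℂ)) * h2))))
      = lowerProd h1 h2 lam i (M + 1) := by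
    intro M hM
    induction M, hM using Nat.le_induction with
    | base =>
      simp only [lowerProd, rowEnd, Icc_eq_empty (show ¬ i + 1 ≤ i by omega), Ico_self,
        prod_empty, mul_one, one_mul]
      push_cast
      congr 1 <;> ring
    | succ M hM ih =>
      rw [prod_Icc_succ_top (by omega), ← mul_assoc, ih,
        lowerProd_succ h1 h2 lam (show i < M + 1 by omega)]
      congr 1
      simp only [rowEnd]
      push_cast
      congr 1 <;> ring
  have h0 := apply_eq_zero_of_plen_le lam (Nat.le_succ (plen lam))
  rw [fcoef, mul_assoc (-(1 / h1)), key _ hi.le, pow_zero, mul_one,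
    ← lowerProd_eq_of_le h1 h2 hgen lam (i := i) (by omega) h0 (le_max_left _ m),
    lowerProd_eq_of_le h1 h2 hgen lam hm hm0 (le_max_right _ m)]

lemma rowEnd_addBox_self (lam : Ptn) (i : ℕ) (h : Addable lam i) :
    rowEnd h1 h2 (addBox lam i h) i = rowEnd h1 h2 lam i + h1 := by
  simp only [rowEnd, addBox_apply, if_pos]
  push_cast
  ring

lemma rowEnd_addBox_of_ne (lam : Ptn) {i p : ℕ} (h : Addable lam i) (hp : p ≠ i) :
    rowEnd h1 h2 (addBox lam i h) p = rowEnd h1 h2 lam p := by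
  simp only [rowEnd, addBox_apply, if_neg hp]

lemma rowEnd_remBox_self (lam : Ptn) (i : ℕ) (h : Removable lam i) :
    rowEnd h1 h2 (remBox lam i h) i = rowEnd h1 h2 lam i - h1 := by
  have h' : lam.1 (i + 1) < lam.1 i := h
  simp only [rowEnd, remBox_apply, if_pos]
  rw [Nat.cast_sub (by omega)]
  push_cast
  ring

lemma rowEnd_remBox_of_ne (lam : Ptn) {i p : ℕ} (h : Removable lam i) (hp : p ≠ i) :
    rowEnd h1 h2 (remBox lam i h) p = rowEnd h1 h2 lam p := by
  simp only [rowEnd, remBox_apply, if_neg hp]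

lemma fcoef_mul_ecoef_comm
    (hgen : ∀ a b : ℤ, ¬(a = 0 ∧ b = 0) → (a : ℂ) * h1 + (b : ℂ) * h2 ≠ 0)
    (j : ℕ) (lam : Ptn) {i k : ℕ} (hik : i ≠ k) (hk : Removable lam k) (hi : Addable lam i)
    (hk' : Removable (addBox lam i hi) k) :
    fcoef h1 h2 0 0 lam k * ecoef h1 h2 0 j (remBox lam k hk) i
      = ecoef h1 h2 0 j lam i * fcoef h1 h2 0 0 (addBox lam i hi) k := by
  have hkl := hk.lt_plen
  have hil := hi.le_plen
  have hm : lam.1 (plen lam + 1) = 0 := apply_eq_zero_of_plen_le lam (Nat.le_succ _)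
  have hm' : (addBox lam i hi).1 (plen lam + 1) = 0 := by
    rw [addBox_apply, if_neg (by omega), hm]
  rw [fcoef_zero_eq h1 h2 hgen lam hkl (by omega) hm,
    fcoef_zero_eq h1 h2 hgen _ hk'.lt_plen (by omega) hm', ecoef_eq, ecoef_eq,
    rowEnd_remBox_of_ne h1 h2 lam hk hik]
  unfold lowerProd
  rw [rowEnd_addBox_of_ne h1 h2 lam hi hik.symm,
    rowEnd_addBox_of_ne h1 h2 lam hi (show plen lam + 1 ≠ i by omega)]
  rcases lt_or_gt_of_ne hik with hlt | hlt
  · have hr : ∀ p ∈ range i, rowFactor h1 h2 (rowEnd h1 h2 lam i -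
        rowEnd h1 h2 (remBox lam k hk) p) =
        rowFactor h1 h2 (rowEnd h1 h2 lam i - rowEnd h1 h2 lam p) := fun p hp => by
      rw [rowEnd_remBox_of_ne h1 h2 lam hk (by have := mem_range.1 hp; omega)]
    have ha : ∀ p ∈ Ico (k + 1) (plen lam + 1), rowFactor h1 h2
        (rowEnd h1 h2 (addBox lam i hi) p - rowEnd h1 h2 lam k) =
        rowFactor h1 h2 (rowEnd h1 h2 lam p - rowEnd h1 h2 lam k) := fun p hp => by
      rw [rowEnd_addBox_of_ne h1 h2 lam hi (by have := mem_Ico.1 hp; omega)]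
    rw [prod_congr rfl hr, prod_congr rfl ha]
    ring
  · have hki : k ∈ range i := by simpa using hlt
    have hik' : i ∈ Ico (k + 1) (plen lam + 1) := by simp; omega
    have hr : ∀ p ∈ (range i).erase k, rowFactor h1 h2 (rowEnd h1 h2 lam i -
        rowEnd h1 h2 (remBox lam k hk) p) =
        rowFactor h1 h2 (rowEnd h1 h2 lam i - rowEnd h1 h2 lam p) := fun p hp => by
      rw [rowEnd_remBox_of_ne h1 h2 lam hk (ne_of_mem_erase hp)]
    have ha : ∀ p ∈ (Ico (k + 1) (plen lam + 1)).erase i, rowFactor h1 h2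
        (rowEnd h1 h2 (addBox lam i hi) p - rowEnd h1 h2 lam k) =
        rowFactor h1 h2 (rowEnd h1 h2 lam p - rowEnd h1 h2 lam k) := fun p hp => by
      rw [rowEnd_addBox_of_ne h1 h2 lam hi (ne_of_mem_erase hp)]
    rw [← mul_prod_erase _ _ hki, ← mul_prod_erase _ _ hki, ← mul_prod_erase _ _ hik',
      ← mul_prod_erase _ _ hik', prod_congr rfl hr, prod_congr rfl ha,
      rowEnd_remBox_self, rowEnd_addBox_self,
      show rowEnd h1 h2 lam i - (rowEnd h1 h2 lam k - h1)
        = rowEnd h1 h2 lam i + h1 - rowEnd h1 h2 lam k by ring]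
    ring

lemma efTerm_eq_feTerm
    (hgen : ∀ a b : ℤ, ¬(a = 0 ∧ b = 0) → (a : ℂ) * h1 + (b : ℂ) * h2 ≠ 0)
    (j : ℕ) (lam : Ptn) {i k : ℕ} (hik : i ≠ k) :
    efTerm h1 h2 0 j 0 lam k i = feTerm h1 h2 0 j 0 lam k i := by
  have hiff := removable_and_addable_iff lam hik
  by_cases hex : ∃ h : Removable lam k, Addable (remBox lam k h) i
  · obtain ⟨hi', hk'⟩ := hiff.1 hex
    obtain ⟨hk, hi⟩ := hex
    rw [efTerm, feTerm, dif_pos hk, dif_pos hi, dif_pos hi', dif_pos hk',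
      addBox_remBox_comm lam hik hk hi hi' hk',
      fcoef_mul_ecoef_comm h1 h2 hgen j lam hik hk hi' hk']
  · have hex' := mt hiff.2 hex
    have hef : efTerm h1 h2 0 j 0 lam k i = 0 := by
      unfold efTerm
      split_ifs with hk hi
      · exact absurd ⟨hk, hi⟩ hex
      · rfl
      · rfl
    have hfe : feTerm h1 h2 0 j 0 lam k i = 0 := by
      unfold feTerm
      split_ifs with hi hk
      · exact absurd ⟨hi, hk⟩ hex'
      · rfl
      · rfl
    rw [hef, hfe]

/-- The product of the interaction factors between row `k` and the other nonzero rows, evaluated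
at `z`. -/
def rowProd (lam : Ptn) (k : ℕ) (z : ℂ) : ℂ :=
  ∏ p ∈ (range (plen lam)).erase k, rowFactor h1 h2 (z - rowEnd h1 h2 lam p)

lemma prod_range_mul_prod_Ico {k n : ℕ} (hk : k < n) (F : ℕ → ℂ) :
    (∏ p ∈ range k, F p) * ∏ p ∈ Ico (k + 1) n, F p = ∏ p ∈ (range n).erase k, F p := by
  rw [← prod_union]
  · congr 1
    ext p
    simp
    omega
  · rw [disjoint_left]
    intro p
    simp
    omega

lemma rowProd_eq_zero_of_mem (lam : Ptn) {k p : ℕ} {z : ℂ} (hp : p < plen lam) (hpk : p ≠ k)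
    (h : rowFactor h1 h2 (z - rowEnd h1 h2 lam p) = 0) : rowProd h1 h2 lam k z = 0 :=
  prod_eq_zero (mem_erase.2 ⟨hpk, mem_range.2 hp⟩) h

/-- The diagonal part of `e_j f_0 |λ⟩` coming from row `k`. -/
lemma efTerm_self
    (hgen : ∀ a b : ℤ, ¬(a = 0 ∧ b = 0) → (a : ℂ) * h1 + (b : ℂ) * h2 ≠ 0)
    (j : ℕ) (lam : Ptn) {k : ℕ} (hk : k < plen lam) :
    efTerm h1 h2 0 j 0 lam k k = Finsupp.single lam
      (-(1 / h1 ^ 2) * rowProd h1 h2 lam k (rowEnd h1 h2 lam k - h1) *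
        ((rowEnd h1 h2 lam (plen lam) - rowEnd h1 h2 lam k - h2) /
          (rowEnd h1 h2 lam (plen lam) - rowEnd h1 h2 lam k + h1)) *
        (rowEnd h1 h2 lam k - h1) ^ j) := by
  by_cases hr : Removable lam k
  · rw [efTerm, dif_pos hr, dif_pos (addable_remBox_self hr), addBox_remBox hr,
      fcoef_zero_eq h1 h2 hgen lam hk hk (apply_eq_zero_of_plen_le lam le_rfl), ecoef_eq,
      rowEnd_remBox_self, rowProd, ← prod_range_mul_prod_Ico hk,
      prod_congr rfl (fun p hp => by
        rw [rowEnd_remBox_of_ne h1 h2 lam hr (by have := mem_range.1 hp; omega)])]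
    unfold lowerProd
    rw [prod_congr (s₁ := Ico (k + 1) (plen lam)) rfl (fun p _ => by
      rw [← rowFactor_neg, show -h1 - (rowEnd h1 h2 lam p - rowEnd h1 h2 lam k)
        = rowEnd h1 h2 lam k - h1 - rowEnd h1 h2 lam p by ring])]
    congr 1
    ring
  · have hle : lam.1 k ≤ lam.1 (k + 1) := not_lt.1 hr
    have hanti := lam.2.1 (Nat.le_succ k)
    have heq : lam.1 (k + 1) = lam.1 k := le_antisymm hanti hle
    have hpos := apply_pos_of_lt_plen lam hk
    have hk1 : k + 1 < plen lam := by
      by_contra hc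
      have := apply_eq_zero_of_plen_le lam (not_lt.1 hc)
      omega
    rw [efTerm, dif_neg hr, rowProd_eq_zero_of_mem h1 h2 lam hk1 (by omega)]
    · simp
    · have : rowEnd h1 h2 lam k - h1 - rowEnd h1 h2 lam (k + 1) + h1 + h2 = 0 := by
        simp only [rowEnd, heq]; push_cast; ring
      rw [rowFactor, this]
      simp

/-- The diagonal part of `f_0 e_j |λ⟩` coming from a nonzero row `k`. -/
lemma feTerm_self
    (hgen : ∀ a b : ℤ, ¬(a = 0 ∧ b = 0) → (a : ℂ) * h1 + (b : ℂ) * h2 ≠ 0)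
    (j : ℕ) (lam : Ptn) {k : ℕ} (hk : k < plen lam) :
    feTerm h1 h2 0 j 0 lam k k = Finsupp.single lam
      (-(1 / h1 ^ 2) * rowProd h1 h2 lam k (rowEnd h1 h2 lam k) *
        ((rowEnd h1 h2 lam (plen lam) - rowEnd h1 h2 lam k - h1 - h2) /
          (rowEnd h1 h2 lam (plen lam) - rowEnd h1 h2 lam k)) *
        rowEnd h1 h2 lam k ^ j) := by
  by_cases ha : Addable lam k
  · have hrem := removable_addBox_self ha
    have hzero : (addBox lam k ha).1 (plen lam) = 0 := by
      rw [addBox_apply, if_neg hk.ne', apply_eq_zero_of_plen_le lam le_rfl]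
    rw [feTerm, dif_pos ha, dif_pos hrem, remBox_addBox ha,
      fcoef_zero_eq h1 h2 hgen _ hrem.lt_plen hk hzero, ecoef_eq, rowProd,
      ← prod_range_mul_prod_Ico hk]
    unfold lowerProd
    rw [rowEnd_addBox_self, rowEnd_addBox_of_ne h1 h2 lam ha hk.ne',
      prod_congr (s₁ := Ico (k + 1) (plen lam)) rfl (fun p hp => by
        rw [rowEnd_addBox_of_ne h1 h2 lam ha (by have := mem_Ico.1 hp; omega), ← rowFactor_neg,
          show -h1 - (rowEnd h1 h2 lam p - (rowEnd h1 h2 lam k + h1))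
            = rowEnd h1 h2 lam k - rowEnd h1 h2 lam p by ring])]
    rw [show rowEnd h1 h2 lam (plen lam) - (rowEnd h1 h2 lam k + h1) + h1
        = rowEnd h1 h2 lam (plen lam) - rowEnd h1 h2 lam k by ring,
      show rowEnd h1 h2 lam (plen lam) - (rowEnd h1 h2 lam k + h1) - h2
        = rowEnd h1 h2 lam (plen lam) - rowEnd h1 h2 lam k - h1 - h2 by ring]
    congr 1
    ring
  · cases k with
    | zero => exact absurd (fun p hp => absurd hp (Nat.not_lt_zero p)) ha
    | succ k =>
      rw [addable_succ_iff, not_lt] at ha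
      have heq : lam.1 (k + 1) = lam.1 k := le_antisymm (lam.2.1 (Nat.le_succ k)) ha
      rw [feTerm, dif_neg (by rw [addable_succ_iff]; omega),
        rowProd_eq_zero_of_mem h1 h2 lam (show k < plen lam by omega) (by omega)]
      · simp
      · have : rowEnd h1 h2 lam (k + 1) - rowEnd h1 h2 lam k - h2 = 0 := by
          simp only [rowEnd, heq]; push_cast; ring
        rw [rowFactor, this]
        simp

/-- The diagonal part of `f_0 e_j |λ⟩` coming from the first zero row. -/
lemma feTerm_plen
    (hgen : ∀ a b : ℤ, ¬(a = 0 ∧ b = 0) → (a : ℂ) * h1 + (b : ℂ) * h2 ≠ 0)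
    (j : ℕ) (lam : Ptn) :
    feTerm h1 h2 0 j 0 lam (plen lam) (plen lam) = Finsupp.single lam
      ((1 / (h1 * h2)) * rowProd h1 h2 lam (plen lam) (rowEnd h1 h2 lam (plen lam)) *
        rowEnd h1 h2 lam (plen lam) ^ j) := by
  have hn := apply_eq_zero_of_plen_le lam (le_refl (plen lam))
  have hn1 := apply_eq_zero_of_plen_le lam (Nat.le_succ (plen lam))
  have ha : Addable lam (plen lam) := fun p hp => by
    rw [hn]; exact apply_pos_of_lt_plen lam hp
  have hrem := removable_addBox_self ha
  have hzero : (addBox lam (plen lam) ha).1 (plen lam + 1) = 0 := by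
    rw [addBox_apply, if_neg (by omega), hn1]
  have hh1 : h1 ≠ 0 := by simpa using hgen 1 0 (by simp)
  have hh2 : h2 ≠ 0 := by simpa using hgen 0 1 (by simp)
  rw [feTerm, dif_pos ha, dif_pos hrem, remBox_addBox ha,
    fcoef_zero_eq h1 h2 hgen _ hrem.lt_plen (Nat.lt_succ_self _) hzero, ecoef_eq, rowProd,
    erase_eq_of_notMem (by simp)]
  unfold lowerProd
  rw [rowEnd_addBox_self, rowEnd_addBox_of_ne h1 h2 lam ha (by omega), Ico_self, prod_empty]
  have hx : rowEnd h1 h2 lam (plen lam + 1) = rowEnd h1 h2 lam (plen lam) + h2 := by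
    simp only [rowEnd, hn, hn1]; push_cast; ring
  rw [show rowEnd h1 h2 lam (plen lam + 1) - (rowEnd h1 h2 lam (plen lam) + h1) - h2 = -h1 by
      rw [hx]; ring,
    show rowEnd h1 h2 lam (plen lam + 1) - (rowEnd h1 h2 lam (plen lam) + h1) + h1 = h2 by
      rw [hx]; ring]
  congr 1
  field_simp

/-- The poles of the generating function of the diagonal part of the commutator. -/
def diagPole (lam : Ptn) : ℕ ⊕ ℕ → ℂ :=
  Sum.elim (fun p => rowEnd h1 h2 lam p) (fun p => rowEnd h1 h2 lam p - h1)

/-- The zeros of the generating function of the diagonal part of the commutator. -/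
def diagZero (lam : Ptn) : ℕ ⊕ ℕ → ℂ :=
  Sum.elim (fun p => rowEnd h1 h2 lam p - h1 - h2) (fun p => rowEnd h1 h2 lam p + h2)

/-- The index set of the zeros and poles. -/
def diagIndex (lam : Ptn) : Finset (ℕ ⊕ ℕ) :=
  (range (plen lam + 1)).disjSum (range (plen lam))

lemma diagPole_injective
    (hgen : ∀ a b : ℤ, ¬(a = 0 ∧ b = 0) → (a : ℂ) * h1 + (b : ℂ) * h2 ≠ 0)
    (lam : Ptn) : Function.Injective (diagPole h1 h2 lam) := by
  have hh1 : h1 ≠ 0 := by simpa using hgen 1 0 (by simp)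
  have hcross : ∀ p q : ℕ, rowEnd h1 h2 lam p ≠ rowEnd h1 h2 lam q - h1 := by
    intro p q h
    rcases eq_or_ne p q with rfl | hpq
    · exact hh1 (by linear_combination h)
    · exact rowEnd_sub_add_ne_zero h1 h2 hgen lam hpq.symm 1 (by push_cast; linear_combination h)
  rintro (p | p) (q | q) h
  · by_contra hne
    exact rowEnd_sub_ne_zero h1 h2 hgen lam (i := q) (p := p) (fun h => hne (by rw [h]))
      (sub_eq_zero.2 h)
  · exact absurd h (hcross p q)
  · exact absurd h.symm (hcross q p)
  · by_contra hne
    refine rowEnd_sub_ne_zero h1 h2 hgen lam (i := q) (p := p) (fun h => hne (by rw [h])) ?_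
    simp only [diagPole, Sum.elim_inr] at h
    linear_combination h

lemma disjSum_erase_inl (s t : Finset ℕ) (k : ℕ) :
    (s.disjSum t).erase (Sum.inl k) = (s.erase k).disjSum t := by
  ext (p | p) <;> simp

lemma disjSum_erase_inr (s t : Finset ℕ) (k : ℕ) :
    (s.disjSum t).erase (Sum.inr k) = s.disjSum (t.erase k) := by
  ext (p | p) <;> simp

lemma rowProd_eq (lam : Ptn) (k : ℕ) (z : ℂ) :
    rowProd h1 h2 lam k z =
      (∏ p ∈ (range (plen lam)).erase k,
        (z - (rowEnd h1 h2 lam p - h1 - h2)) / (z - rowEnd h1 h2 lam p)) *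
      ∏ p ∈ (range (plen lam)).erase k,
        (z - (rowEnd h1 h2 lam p + h2)) / (z - (rowEnd h1 h2 lam p - h1)) := by
  rw [rowProd, ← prod_mul_distrib]
  refine prod_congr rfl fun p _ => ?_
  rw [rowFactor, div_mul_div_comm]
  congr 1 <;> ring

lemma residue_inl
    (hgen : ∀ a b : ℤ, ¬(a = 0 ∧ b = 0) → (a : ℂ) * h1 + (b : ℂ) * h2 ≠ 0)
    (lam : Ptn) {k : ℕ} (hk : k < plen lam) :
    residue (diagPole h1 h2 lam) (diagZero h1 h2 lam) (diagIndex lam) (Sum.inl k) =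
      h1 * h2 * (h1 + h2) * (-(1 / h1 ^ 2) * rowProd h1 h2 lam k (rowEnd h1 h2 lam k) *
        ((rowEnd h1 h2 lam (plen lam) - rowEnd h1 h2 lam k - h1 - h2) /
          (rowEnd h1 h2 lam (plen lam) - rowEnd h1 h2 lam k))) := by
  have hh1 : h1 ≠ 0 := by simpa using hgen 1 0 (by simp)
  have hd := rowEnd_sub_ne_zero h1 h2 hgen lam hk.ne
  have hd' : rowEnd h1 h2 lam k - rowEnd h1 h2 lam (plen lam) ≠ 0 :=
    rowEnd_sub_ne_zero h1 h2 hgen lam hk.ne'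
  rw [residue, diagIndex, disjSum_erase_inl, prod_disjSum, range_add_one,
    erase_insert_of_ne hk.ne', prod_insert (by simp), ← mul_prod_erase (range (plen lam)) _
      (mem_range.2 hk), rowProd_eq]
  simp only [diagPole, diagZero, Sum.elim_inl, Sum.elim_inr]
  rw [show rowEnd h1 h2 lam k - (rowEnd h1 h2 lam k + h2) = -h2 by ring,
    show rowEnd h1 h2 lam k - (rowEnd h1 h2 lam k - h1) = h1 by ring,
    show (rowEnd h1 h2 lam k - (rowEnd h1 h2 lam (plen lam) - h1 - h2)) /
        (rowEnd h1 h2 lam k - rowEnd h1 h2 lam (plen lam))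
      = (rowEnd h1 h2 lam (plen lam) - rowEnd h1 h2 lam k - h1 - h2) /
          (rowEnd h1 h2 lam (plen lam) - rowEnd h1 h2 lam k) by
      rw [div_eq_div_iff hd' hd]; ring]
  generalize (rowEnd h1 h2 lam (plen lam) - rowEnd h1 h2 lam k - h1 - h2) /
    (rowEnd h1 h2 lam (plen lam) - rowEnd h1 h2 lam k) = r
  field_simp
  ring

lemma residue_inl_plen (lam : Ptn) :
    residue (diagPole h1 h2 lam) (diagZero h1 h2 lam) (diagIndex lam) (Sum.inl (plen lam)) =
      (h1 + h2) * rowProd h1 h2 lam (plen lam) (rowEnd h1 h2 lam (plen lam)) := by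
  rw [residue, diagIndex, disjSum_erase_inl, prod_disjSum, range_add_one,
    erase_insert (by simp), rowProd_eq, erase_eq_of_notMem (by simp)]
  simp only [diagPole, diagZero, Sum.elim_inl, Sum.elim_inr]
  ring

lemma residue_inr
    (hgen : ∀ a b : ℤ, ¬(a = 0 ∧ b = 0) → (a : ℂ) * h1 + (b : ℂ) * h2 ≠ 0)
    (lam : Ptn) {k : ℕ} (hk : k < plen lam) :
    residue (diagPole h1 h2 lam) (diagZero h1 h2 lam) (diagIndex lam) (Sum.inr k) =
      -(h1 * h2 * (h1 + h2)) * (-(1 / h1 ^ 2) *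
        rowProd h1 h2 lam k (rowEnd h1 h2 lam k - h1) *
        ((rowEnd h1 h2 lam (plen lam) - rowEnd h1 h2 lam k - h2) /
          (rowEnd h1 h2 lam (plen lam) - rowEnd h1 h2 lam k + h1))) := by
  have hh1 : h1 ≠ 0 := by simpa using hgen 1 0 (by simp)
  have hd : rowEnd h1 h2 lam (plen lam) - rowEnd h1 h2 lam k + h1 ≠ 0 := by
    simpa using rowEnd_sub_add_ne_zero h1 h2 hgen lam hk.ne 1
  have hd' : rowEnd h1 h2 lam k - h1 - rowEnd h1 h2 lam (plen lam) ≠ 0 := by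
    intro h
    exact hd (by linear_combination -h)
  rw [residue, diagIndex, disjSum_erase_inr, prod_disjSum, range_add_one,
    prod_insert (by simp), ← mul_prod_erase (range (plen lam)) _
      (mem_range.2 hk), rowProd_eq]
  simp only [diagPole, diagZero, Sum.elim_inl, Sum.elim_inr]
  rw [show rowEnd h1 h2 lam k - h1 - (rowEnd h1 h2 lam k - h1 - h2) = h2 by ring,
    show rowEnd h1 h2 lam k - h1 - rowEnd h1 h2 lam k = -h1 by ring,
    show rowEnd h1 h2 lam k - h1 - (rowEnd h1 h2 lam k + h2) = -(h1 + h2) by ring,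
    show (rowEnd h1 h2 lam k - h1 - (rowEnd h1 h2 lam (plen lam) - h1 - h2)) /
        (rowEnd h1 h2 lam k - h1 - rowEnd h1 h2 lam (plen lam))
      = (rowEnd h1 h2 lam (plen lam) - rowEnd h1 h2 lam k - h2) /
          (rowEnd h1 h2 lam (plen lam) - rowEnd h1 h2 lam k + h1) by
      rw [div_eq_div_iff hd' hd]; ring]
  generalize (rowEnd h1 h2 lam (plen lam) - rowEnd h1 h2 lam k - h2) /
    (rowEnd h1 h2 lam (plen lam) - rowEnd h1 h2 lam k + h1) = r
  field_simp

lemma sum_rowEnd (lam : Ptn) :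
    ∑ p ∈ range (plen lam), rowEnd h1 h2 lam p
      = (psize lam : ℂ) * h1 + (plen lam : ℂ) * ((plen lam : ℂ) - 1) / 2 * h2 := by
  have gauss : ∀ n : ℕ, ∑ p ∈ range n, (p : ℂ) = (n : ℂ) * ((n : ℂ) - 1) / 2 := by
    intro n
    induction n with
    | zero => simp
    | succ n ih => rw [sum_range_succ, ih]; push_cast; ring
  simp only [rowEnd, sum_add_distrib, ← sum_mul, gauss, psize]
  push_cast
  rfl

lemma second_moment_residue
    (hgen : ∀ a b : ℤ, ¬(a = 0 ∧ b = 0) → (a : ℂ) * h1 + (b : ℂ) * h2 ≠ 0)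
    (lam : Ptn) :
    ∑ i ∈ diagIndex lam, residue (diagPole h1 h2 lam) (diagZero h1 h2 lam) (diagIndex lam) i *
        diagPole h1 h2 lam i ^ 2
      = -(h1 * h2 * (h1 + h2)) * (2 * (psize lam : ℂ)) := by
  have split : ∀ F : ℂ → ℂ,
      ∑ i ∈ diagIndex lam, (F (diagPole h1 h2 lam i) - F (diagZero h1 h2 lam i))
        = F (rowEnd h1 h2 lam (plen lam)) - F (rowEnd h1 h2 lam (plen lam) - h1 - h2)
          + ∑ p ∈ range (plen lam), (F (rowEnd h1 h2 lam p) - F (rowEnd h1 h2 lam p - h1 - h2)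
            + (F (rowEnd h1 h2 lam p - h1) - F (rowEnd h1 h2 lam p + h2))) := by
    intro F
    rw [diagIndex, sum_disjSum, sum_range_succ, sum_add_distrib]
    simp only [diagPole, diagZero, Sum.elim_inl, Sum.elim_inr]
    ring
  have hx : rowEnd h1 h2 lam (plen lam) = (plen lam : ℂ) * h2 := by
    rw [rowEnd, apply_eq_zero_of_plen_le lam le_rfl]
    simp
  have p1 := split (fun z => z)
  have p2 := split (fun z => z ^ 2)
  have p3 := split (fun z => z ^ 3)
  rw [sum_congr (s₁ := range (plen lam)) rfl (g := fun _ => (0 : ℂ)) (fun p _ => by ring),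
    sum_const_zero] at p1
  rw [sum_congr (s₁ := range (plen lam)) rfl (g := fun _ => -2 * h2 * (h1 + h2))
    (fun p _ => by ring), sum_const, card_range, nsmul_eq_mul] at p2
  rw [sum_congr (s₁ := range (plen lam)) rfl
    (g := fun p => -6 * h2 * (h1 + h2) * rowEnd h1 h2 lam p + 3 * h1 * h2 * (h1 + h2)) (fun p _ => by ring), sum_add_distrib, ← mul_sum, sum_rowEnd,
    sum_const, card_range, nsmul_eq_mul] at p3
  rw [(moments_residue _ _ _ (diagPole_injective h1 h2 hgen lam).injOn).2.2, p1, p2, p3, hx]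
  ring

end Coefficients

end Fock

open Fock

/-- For the Fock module of the affine Yangian of `gl_1` (with `u = 0`
and generic `h1, h2`), the operator `[e_2, f_0]` acts on the basis vector `|λ⟩` by the
scalar `2·|λ|`. -/
theorem fock_e2_f0_commutator (h1 h2 : ℂ)
    (hgen : ∀ a b : ℤ, ¬(a = 0 ∧ b = 0) → (a : ℂ) * h1 + (b : ℂ) * h2 ≠ 0)
    (lam : Ptn) :
    (eOp h1 h2 0 2 * fOp h1 h2 0 0 - fOp h1 h2 0 0 * eOp h1 h2 0 2)
        (Finsupp.single lam 1)
      = (2 * (psize lam : ℂ)) • Finsupp.single lam 1 := by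
  have hh1 : h1 ≠ 0 := by simpa using hgen 1 0 (by simp)
  have hh2 : h2 ≠ 0 := by simpa using hgen 0 1 (by simp)
  have hh3 : h1 + h2 ≠ 0 := by simpa using hgen 1 1 (by simp)
  obtain ⟨A, hA⟩ : ∃ A : ℕ → ℂ, ∀ k < plen lam,
      efTerm h1 h2 0 2 0 lam k k = Finsupp.single lam (A k) ∧
      residue (diagPole h1 h2 lam) (diagZero h1 h2 lam) (diagIndex lam) (Sum.inr k) *
        diagPole h1 h2 lam (Sum.inr k) ^ 2 = -(h1 * h2 * (h1 + h2)) * A k :=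
    ⟨fun k => _, fun k hk => ⟨efTerm_self h1 h2 hgen 2 lam hk, by
      rw [residue_inr h1 h2 hgen lam hk, mul_assoc]; rfl⟩⟩
  obtain ⟨B, hB⟩ : ∃ B : ℕ → ℂ, ∀ k < plen lam,
      feTerm h1 h2 0 2 0 lam k k = Finsupp.single lam (B k) ∧
      residue (diagPole h1 h2 lam) (diagZero h1 h2 lam) (diagIndex lam) (Sum.inl k) *
        diagPole h1 h2 lam (Sum.inl k) ^ 2 = h1 * h2 * (h1 + h2) * B k :=
    ⟨fun k => _, fun k hk => ⟨feTerm_self h1 h2 hgen 2 lam hk, by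
      rw [residue_inl h1 h2 hgen lam hk, mul_assoc]; rfl⟩⟩
  obtain ⟨C, hC, hC'⟩ : ∃ C : ℂ,
      feTerm h1 h2 0 2 0 lam (plen lam) (plen lam) = Finsupp.single lam C ∧
      residue (diagPole h1 h2 lam) (diagZero h1 h2 lam) (diagIndex lam) (Sum.inl (plen lam)) *
        diagPole h1 h2 lam (Sum.inl (plen lam)) ^ 2 = h1 * h2 * (h1 + h2) * C :=
    ⟨_, feTerm_plen h1 h2 hgen 2 lam, by
      rw [residue_inl_plen, diagPole, Sum.elim_inl]; field_simp⟩
  have hef : efTerm h1 h2 0 2 0 lam (plen lam) (plen lam) = 0 :=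
    dif_neg fun h => lt_irrefl _ h.lt_plen
  have hdiag : ∀ k ∈ Finset.range (plen lam + 1),
      ∑ i ∈ Finset.range (plen lam + 1),
        (efTerm h1 h2 0 2 0 lam k i - feTerm h1 h2 0 2 0 lam k i)
      = efTerm h1 h2 0 2 0 lam k k - feTerm h1 h2 0 2 0 lam k k := fun k hk =>
    Finset.sum_eq_single_of_mem k hk fun i _ hik => by
      rw [efTerm_eq_feTerm h1 h2 hgen 2 lam hik, sub_self]
  have hterm : ∀ k ∈ Finset.range (plen lam),
      efTerm h1 h2 0 2 0 lam k k - feTerm h1 h2 0 2 0 lam k k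
      = Finsupp.single lam (A k - B k) := fun k hk => by
    rw [(hA k (Finset.mem_range.1 hk)).1, (hB k (Finset.mem_range.1 hk)).1, Finsupp.single_sub]
  have hscalar : ∑ k ∈ Finset.range (plen lam), (A k - B k) - C = 2 * (psize lam : ℂ) := by
    have hmom := second_moment_residue h1 h2 hgen lam
    nth_rewrite 1 [diagIndex] at hmom
    rw [Finset.sum_disjSum, Finset.sum_range_succ, hC',
      Finset.sum_congr rfl fun k hk => (hA k (Finset.mem_range.1 hk)).2,
      Finset.sum_congr rfl fun k hk => (hB k (Finset.mem_range.1 hk)).2,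
      ← Finset.mul_sum, ← Finset.mul_sum] at hmom
    rw [Finset.sum_sub_distrib]
    refine mul_left_cancel₀ (neg_ne_zero.2 (mul_ne_zero (mul_ne_zero hh1 hh2) hh3)) ?_
    linear_combination hmom
  rw [LinearMap.sub_apply, eOp_mul_fOp_single, fOp_mul_eOp_single, ← Finset.sum_sub_distrib]
  simp_rw [← Finset.sum_sub_distrib]
  rw [Finset.sum_congr rfl hdiag, Finset.sum_range_succ, Finset.sum_congr rfl hterm, hef, hC,
    zero_sub, ← Finsupp.single_finsetSum, ← sub_eq_add_neg, ← Finsupp.single_sub, hscalar,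
    Finsupp.smul_single, smul_eq_mul, mul_one]

end
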